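/- arXiv:2305.13350 — 2 statements merged into one kernel-verified Lean document; each statement's English description precedes it below -/
import Mathlib

section
/- Let p > 0 and ρ > 0, and define the kernels g^e_p(x,ρ) = ρ^{p+1} Λ^e_p(xρ) and g^o_p(x,ρ) = ρ^{p+1} Λ^o_p(xρ). Then there exist nonzero real constants c and d, independent of ρ and ω, such that for all real ω: 𝓕(g^e_p(·,ρ))(ω) = c |ω|^p e^{-ω²/(2ρ²)} and 𝓕(g^o_p(·,ρ))(ω) = i · d · sign(ω) |ω|^p e^{-ω²/(2ρ²)}. Moreover, for every f ∈ L¹(ℝ), the convolutions φ^e_p(·,ρ) = f * g^e_p(·,ρ) and φ^o_p(·,ρ) = f * g^o_p(·,ρ) satisfy 𝓕(φ^e_p(·,ρ))(ω) = c |ω|^p e^{-ω²/(2ρ²)} 𝓕f(ω) and 𝓕(φ^o_p(·,ρ))(ω) = i · d · sign(ω) |ω|^p e^{-ω²/(2ρ²)} 𝓕f(ω). -/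
open MeasureTheory Filter Real

/-- The even kernel function `Λ^e_p(x)`. -/
noncomputable def LamE (p x : ℝ) : ℝ :=
  (1 / Real.sqrt (2 * Real.pi)) *
    ∑' n : ℕ, (-1 : ℝ) ^ n * (∏ k ∈ Finset.range n, (p + 2 * (k : ℝ) + 1)) * x ^ (2 * n) /
      (Nat.factorial (2 * n) : ℝ)

/-- The odd kernel function `Λ^o_p(x)`. -/
noncomputable def LamO (p x : ℝ) : ℝ :=
  (1 / Real.sqrt (2 * Real.pi)) *
    ∑' n : ℕ, (-1 : ℝ) ^ n * (∏ k ∈ Finset.range n, (p + 2 * ((k : ℝ) + 1))) * x ^ (2 * n + 1) /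
      (Nat.factorial (2 * n + 1) : ℝ)

noncomputable def hh (p ω : ℝ) : ℝ := ω ^ p * Real.exp (-(1/2) * ω ^ 2)

noncomputable def mm (p : ℝ) : ℝ := ∫ ω in Set.Ioi (0:ℝ), hh p ω

lemma hh_int (p : ℝ) (hp : -1 < p) : IntegrableOn (hh p) (Set.Ioi 0) :=
  integrableOn_rpow_mul_exp_neg_mul_sq (by norm_num) hp

lemma mm_eq (p : ℝ) (hp : -1 < p) :
    mm p = (1/2 : ℝ) ^ (-(p+1)/2) * (1/2) * Real.Gamma ((p+1)/2) := by
  have := integral_rpow_mul_exp_neg_mul_rpow (p := 2) (q := p) (b := 1/2) (by norm_num) hp (by norm_num)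
  rw [mm, ← this]
  refine setIntegral_congr_fun measurableSet_Ioi fun x hx => ?_
  simp [hh]

lemma mm_pos (p : ℝ) (hp : -1 < p) : 0 < mm p := by
  rw [mm_eq p hp]
  have := Real.Gamma_pos_of_pos (s := (p+1)/2) (by linarith)
  positivity

lemma mm_add (p : ℝ) (hp : -1 < p) : mm (p + 2) = (p + 1) * mm p := by
  rw [mm_eq p hp, mm_eq (p+2) (by linarith)]
  have h1 : (p + 2 + 1)/2 = (p+1)/2 + 1 := by ring
  have h2 : -(p + 2 + 1)/2 = -(p+1)/2 - 1 := by ring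
  rw [h1, Real.Gamma_add_one (by linarith), h2, Real.rpow_sub_one (by norm_num)]
  ring

lemma mm_even (p : ℝ) (hp : -1 < p) (n : ℕ) :
    mm (p + 2 * n) = (∏ k ∈ Finset.range n, (p + 2 * (k : ℝ) + 1)) * mm p := by
  induction n with
  | zero => simp
  | succ n ih =>
    rw [Finset.prod_range_succ]
    have : (p + 2 * ((n + 1 : ℕ) : ℝ)) = (p + 2 * n) + 2 := by push_cast; ring
    have h0 : (0:ℝ) ≤ n := n.cast_nonneg
    rw [this, mm_add _ (by linarith), ih]
    ring

lemma hh_mul_pow (p ω : ℝ) (hω : 0 < ω) (n : ℕ) : hh p ω * ω ^ n = hh (p + n) ω := by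
  rw [hh, hh, Real.rpow_add hω, Real.rpow_natCast]; ring

lemma hh_exp_int (p : ℝ) (hp : -1 < p) (x : ℝ) :
    IntegrableOn (fun ω => hh p ω * Real.exp (|x| * ω)) (Set.Ioi 0) := by
  have h1 := (integrableOn_rpow_mul_exp_neg_mul_sq (b := 1/4) (by norm_num) hp).const_mul (Real.exp (x^2))
  refine Integrable.mono' h1 ?_ ?_
  · exact (by unfold hh; fun_prop : Measurable (fun ω => hh p ω * Real.exp (|x| * ω))).aestronglyMeasurable
  · refine (ae_restrict_iff' measurableSet_Ioi).2 (ae_of_all _ fun ω hω => ?_)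
    have hω : 0 < ω := hω
    rw [Real.norm_of_nonneg (by unfold hh; positivity), hh]
    have : Real.exp (-(1/2) * ω^2) * Real.exp (|x| * ω) ≤ Real.exp (x^2) * Real.exp (-(1/4) * ω^2) := by
      rw [← Real.exp_add, ← Real.exp_add, Real.exp_le_exp]
      nlinarith [sq_nonneg (ω/2 - |x|), sq_abs x]
    calc _ = ω^p * (Real.exp (-(1/2) * ω^2) * Real.exp (|x| * ω)) := by ring
      _ ≤ ω^p * (Real.exp (x^2) * Real.exp (-(1/4) * ω^2)) := by gcongr
      _ = _ := by ring

lemma series_gen (p : ℝ) (hp : -1 < p) (x : ℝ) (a : ℕ → ℕ) (F : ℝ → ℝ)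
    (ha : Function.Injective a)
    (hF : ∀ r, HasSum (fun n : ℕ => (-1 : ℝ) ^ n * r ^ (a n) / (Nat.factorial (a n) : ℝ)) (F r)) :
    HasSum (fun n => (-1 : ℝ) ^ n * x ^ (a n) / (Nat.factorial (a n) : ℝ) * mm (p + a n))
      (∫ ω in Set.Ioi (0:ℝ), hh p ω * F (ω * x)) := by
  have key := hasSum_integral_of_dominated_convergence (μ := volume.restrict (Set.Ioi (0:ℝ)))
    (F := fun n ω => (-1 : ℝ) ^ n * x ^ (a n) / (Nat.factorial (a n) : ℝ) * hh (p + a n) ω)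
    (f := fun ω => hh p ω * F (ω * x))
    (bound := fun n ω => hh p ω * ((|x| * ω) ^ (a n) / (Nat.factorial (a n) : ℝ))) ?_ ?_ ?_ ?_ ?_
  · simp only [integral_const_mul] at key
    exact key
  · intro n
    exact (by unfold hh; fun_prop : Measurable (fun ω => (-1 : ℝ) ^ n * x ^ (a n) / (Nat.factorial (a n) : ℝ) * hh (p + a n) ω)).aestronglyMeasurable
  · intro n
    refine (ae_restrict_iff' measurableSet_Ioi).2 (ae_of_all _ fun ω hω => ?_)
    have hω : 0 < ω := hω
    have : 0 ≤ hh p ω := by unfold hh; positivity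
    rw [← hh_mul_pow p ω hω]
    simp only [norm_mul, norm_div, norm_pow, norm_neg, norm_one, one_pow, Real.norm_eq_abs, Nat.abs_cast,
      abs_of_pos hω, abs_of_nonneg this]
    apply le_of_eq
    rw [mul_pow]; ring
  · refine ae_of_all _ fun ω => ?_
    exact ((Real.summable_pow_div_factorial (|x| * ω)).comp_injective ha).mul_left _
  · have h2 := hh_exp_int p hp x
    refine Integrable.mono' h2 ?_ ?_
    · refine Measurable.aestronglyMeasurable ?_
      refine Measurable.tsum ?_
      intro n
      unfold hh; fun_prop
    · refine (ae_restrict_iff' measurableSet_Ioi).2 (ae_of_all _ fun ω hω => ?_)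
      have hω : 0 < ω := hω
      have h3 : 0 ≤ hh p ω := by unfold hh; positivity
      rw [tsum_mul_left, Real.norm_of_nonneg (mul_nonneg h3 (tsum_nonneg fun n => by positivity))]
      gcongr
      rw [Real.exp_eq_exp_ℝ, NormedSpace.exp_eq_tsum_div]
      exact tsum_comp_le_tsum_of_inj (Real.summable_pow_div_factorial (|x| * ω)) (fun n => by positivity) ha
  · refine (ae_restrict_iff' measurableSet_Ioi).2 (ae_of_all _ fun ω hω => ?_)
    have hω : 0 < ω := hω
    have := (hF (ω * x)).mul_left (hh p ω)
    refine this.congr_fun ?_ |> fun h => h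
    intro n
    rw [← hh_mul_pow p ω hω, mul_pow]; ring

lemma LamE_eq (p : ℝ) (hp : 0 < p) (x : ℝ) :
    LamE p x = (1 / Real.sqrt (2 * Real.pi)) / mm p * ∫ ω in Set.Ioi (0:ℝ), hh p ω * Real.cos (ω * x) := by
  have h := series_gen p (by linarith) x (fun n => 2 * n) Real.cos
    (fun a b h => by simpa using h) Real.hasSum_cos
  have hm := mm_pos p (by linarith)
  rw [LamE, ← h.tsum_eq, div_mul_comm (1 / Real.sqrt (2 * Real.pi)), mul_comm _ (1 / Real.sqrt (2 * Real.pi)), ← tsum_div_const]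
  congr 1
  refine tsum_congr fun n => ?_
  push_cast
  rw [mm_even p (by linarith)]
  field_simp

lemma LamO_eq (p : ℝ) (hp : 0 < p) (x : ℝ) :
    LamO p x = (1 / Real.sqrt (2 * Real.pi)) / mm (p+1) * ∫ ω in Set.Ioi (0:ℝ), hh p ω * Real.sin (ω * x) := by
  have h := series_gen p (by linarith) x (fun n => 2 * n + 1) Real.sin
    (fun a b h => by simpa using h) Real.hasSum_sin
  have hm := mm_pos (p+1) (by linarith)
  rw [LamO, ← h.tsum_eq, div_mul_comm (1 / Real.sqrt (2 * Real.pi)), mul_comm _ (1 / Real.sqrt (2 * Real.pi)), ← tsum_div_const]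
  congr 1
  refine tsum_congr fun n => ?_
  push_cast
  have : p + (2 * (n:ℝ) + 1) = (p + 1) + 2 * n := by ring
  rw [this, mm_even (p+1) (by linarith)]
  have : ∀ k : ℕ, p + 1 + 2 * (k:ℝ) + 1 = p + 2 * (k + 1) := fun k => by ring
  simp only [this]
  field_simp

noncomputable def gg (p x : ℝ) : ℂ :=
  ∫ ω in Set.Ioi (0:ℝ), (hh p ω : ℂ) * Complex.exp (Complex.I * x * ω)

lemma hh_bd (a b : ℝ) (hab : b ≤ a) : ∃ C : ℝ, 0 ≤ C ∧ ∀ ω : ℝ, 0 < ω → hh a ω ≤ C * ω ^ b := by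
  obtain ⟨n, hn⟩ := exists_nat_ge (a - b)
  refine ⟨1 + 2 ^ n * n.factorial, by positivity, fun ω hω => ?_⟩
  have h1 : hh a ω = ω ^ b * (ω ^ (a - b) * Real.exp (-(1/2) * ω ^ 2)) := by
    rw [hh, ← mul_assoc, ← Real.rpow_add hω]; congr 2; ring
  rw [h1, mul_comm]
  gcongr
  have h2 : ω ^ (a - b) ≤ 1 + (ω ^ 2) ^ n := by
    rcases le_total ω 1 with h | h
    · have := Real.rpow_le_one hω.le h (sub_nonneg.2 hab)
      have : 0 ≤ (ω ^ 2) ^ n := by positivity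
      linarith
    · calc ω ^ (a - b) ≤ ω ^ (n : ℝ) := Real.rpow_le_rpow_of_exponent_le h hn
        _ = ω ^ n := Real.rpow_natCast _ _
        _ ≤ (ω ^ 2) ^ n := by gcongr; nlinarith
        _ ≤ _ := by linarith
  have h3 := Real.pow_div_factorial_le_exp (x := ω ^ 2 / 2) (by positivity) n
  have h4 : (ω ^ 2) ^ n ≤ 2 ^ n * n.factorial * Real.exp (ω ^ 2 / 2) := by
    rw [div_le_iff₀ (by positivity), div_pow, div_le_iff₀ (by positivity)] at h3
    linarith
  have h5 : 1 ≤ Real.exp (ω ^ 2 / 2) := Real.one_le_exp (by positivity)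
  have h6 : Real.exp (ω ^ 2 / 2) * Real.exp (-(1/2) * ω ^ 2) = 1 := by
    rw [← Real.exp_add]; ring_nf; simp
  calc ω ^ (a - b) * Real.exp (-(1/2) * ω ^ 2)
      ≤ ((1 + 2 ^ n * n.factorial) * Real.exp (ω ^ 2 / 2)) * Real.exp (-(1/2) * ω ^ 2) := by
        gcongr; linarith
    _ = _ := by rw [mul_assoc, h6, mul_one]

lemma hh_nonneg (p : ℝ) {ω : ℝ} (h : 0 < ω) : 0 ≤ hh p ω := by unfold hh; positivity

lemma hh_deriv (p ω : ℝ) (h : 0 < ω) :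
    HasDerivAt (hh p) (p * hh (p - 1) ω - hh (p + 1) ω) ω := by
  have h1 := (Real.hasDerivAt_rpow_const (p := p) (Or.inl h.ne'))
  have h2 : HasDerivAt (fun ω : ℝ => Real.exp (-(1/2) * ω ^ 2)) (Real.exp (-(1/2) * ω ^ 2) * (-(1/2) * (2 * ω))) ω := by
    have := ((hasDerivAt_pow 2 ω).const_mul (-(1/2) : ℝ)).exp
    simpa using this
  have h3 := h1.mul h2
  have e : p * hh (p - 1) ω - hh (p + 1) ω = p * ω ^ (p - 1) * Real.exp (-(1/2) * ω ^ 2) + ω ^ p * (Real.exp (-(1/2) * ω ^ 2) * (-(1/2) * (2 * ω))) := by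
    simp only [hh]
    rw [Real.rpow_add_one h.ne']; ring
  rw [e]; exact h3

noncomputable def h1 (p ω : ℝ) : ℝ := p * hh (p - 1) ω - hh (p + 1) ω
noncomputable def h2 (p ω : ℝ) : ℝ := p * h1 (p - 1) ω - h1 (p + 1) ω

lemma h1_deriv (p ω : ℝ) (h : 0 < ω) : HasDerivAt (h1 p) (h2 p ω) ω :=
  ((hh_deriv (p-1) ω h).const_mul p).sub (hh_deriv (p+1) ω h)

lemma h1_bd (p b : ℝ) (hab : b ≤ p - 1) : ∃ C : ℝ, 0 ≤ C ∧ ∀ ω : ℝ, 0 < ω → |h1 p ω| ≤ C * ω ^ b := by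
  obtain ⟨C, hC, H⟩ := hh_bd (p-1) b hab
  obtain ⟨D, hD, H'⟩ := hh_bd (p+1) b (by linarith)
  refine ⟨|p| * C + D, by positivity, fun ω hω => ?_⟩
  have e1 := H ω hω
  have e2 := H' ω hω
  have e3 : |h1 p ω| ≤ |p * hh (p-1) ω| + |hh (p+1) ω| := abs_sub _ _
  rw [abs_mul, abs_of_nonneg (hh_nonneg _ hω), abs_of_nonneg (hh_nonneg _ hω)] at e3
  calc _ ≤ _ := e3
    _ ≤ |p| * (C * ω ^ b) + D * ω ^ b := by gcongr
    _ = _ := by ring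

lemma h2_bd (p b : ℝ) (hab : b ≤ p - 2) : ∃ C : ℝ, 0 ≤ C ∧ ∀ ω : ℝ, 0 < ω → |h2 p ω| ≤ C * ω ^ b := by
  obtain ⟨C, hC, H⟩ := h1_bd (p-1) b (by linarith)
  obtain ⟨D, hD, H'⟩ := h1_bd (p+1) b (by linarith)
  refine ⟨|p| * C + D, by positivity, fun ω hω => ?_⟩
  have e1 := H ω hω
  have e2 := H' ω hω
  have e3 : |h2 p ω| ≤ |p * h1 (p-1) ω| + |h1 (p+1) ω| := abs_sub _ _
  rw [abs_mul] at e3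
  calc _ ≤ _ := e3
    _ ≤ |p| * (C * ω ^ b) + D * ω ^ b := by gcongr
    _ = _ := by ring

lemma norm_e (x ω : ℝ) : ‖Complex.exp (Complex.I * x * ω)‖ = 1 := by
  rw [show Complex.I * x * ω = ((x * ω : ℝ) : ℂ) * Complex.I by push_cast; ring]
  exact Complex.norm_exp_ofReal_mul_I _

lemma gg_int (p : ℝ) (hp : 0 < p) (x : ℝ) :
    IntegrableOn (fun ω : ℝ => (hh p ω : ℂ) * Complex.exp (Complex.I * x * ω)) (Set.Ioi 0) := by
  refine Integrable.mono' (hh_int p (by linarith)) ?_ ?_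
  · refine Measurable.aestronglyMeasurable ?_
    unfold hh; fun_prop
  · refine (ae_restrict_iff' measurableSet_Ioi).2 (ae_of_all _ fun ω hω => ?_)
    rw [norm_mul, norm_e, mul_one, Complex.norm_real, Real.norm_of_nonneg (hh_nonneg _ hω)]

lemma gg_cont (p : ℝ) (hp : 0 < p) : Continuous (gg p) := by
  unfold gg
  refine continuous_of_dominated (bound := hh p) ?_ ?_ (hh_int p (by linarith)) ?_
  · intro x; exact (gg_int p hp x).aestronglyMeasurable
  · intro x
    refine (ae_restrict_iff' measurableSet_Ioi).2 (ae_of_all _ fun ω hω => ?_)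
    rw [norm_mul, norm_e, mul_one, Complex.norm_real, Real.norm_of_nonneg (hh_nonneg _ hω)]
  · exact ae_of_all _ fun ω => by fun_prop

lemma gg_le (p : ℝ) (x : ℝ) : ‖gg p x‖ ≤ mm p := by
  refine (norm_integral_le_integral_norm _).trans (le_of_eq ?_)
  refine setIntegral_congr_fun measurableSet_Ioi fun ω hω => ?_
  rw [norm_mul, norm_e, mul_one, Complex.norm_real, Real.norm_of_nonneg (hh_nonneg _ hω)]

lemma tail (p : ℝ) (hp : 0 < p) (x : ℝ) (hx : x ≠ 0) (δ : ℝ) (hδ : 0 < δ) (q : ℝ) (hq0 : 0 < q) (hq : q < 1)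
    (A B C : ℝ) (hA : 0 ≤ A) (hB : 0 ≤ B) (hC : 0 ≤ C)
    (HA : ∀ ω : ℝ, 0 < ω → hh p ω ≤ A * ω ^ q)
    (HA' : ∃ A' : ℝ, 0 ≤ A' ∧ ∀ ω : ℝ, 0 < ω → hh p ω ≤ A' * ω ^ (q-1))
    (HB : ∀ ω : ℝ, 0 < ω → |h1 p ω| ≤ B * ω ^ (q-1))
    (HC : ∀ ω : ℝ, 0 < ω → |h2 p ω| ≤ C * ω ^ (q-2)) :
    ‖∫ ω in Set.Ioi δ, (hh p ω : ℂ) * Complex.exp (Complex.I * x * ω)‖ ≤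
      A * δ ^ q / |x| + B * δ ^ (q - 1) / |x|^2 + C * δ ^ (q-1) / (1 - q) / |x|^2 := by
  have hxc : (x : ℂ) ≠ 0 := by exact_mod_cast hx
  obtain ⟨A', hA'0, HA'⟩ := HA'
  set E : ℝ → ℂ := fun ω => Complex.exp (Complex.I * x * ω) with hE
  have hEd : ∀ ω : ℝ, HasDerivAt E (E ω * (Complex.I * x)) ω := by
    intro ω
    have : HasDerivAt (fun ω : ℝ => Complex.I * x * (ω : ℂ)) (Complex.I * x) ω := by
      simpa using (Complex.ofRealCLM.hasDerivAt (x := ω)).const_mul (Complex.I * (x:ℂ))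
    exact this.cexp
  set G : ℝ → ℂ := fun ω => E ω * ((hh p ω : ℂ) * (-Complex.I / x) + (h1 p ω : ℂ) / x ^ 2) with hG
  have hGd : ∀ ω ∈ Set.Ici δ, HasDerivAt G ((hh p ω : ℂ) * E ω + (h2 p ω : ℂ) / x^2 * E ω) ω := by
    intro ω hω
    have hω : 0 < ω := lt_of_lt_of_le hδ hω
    have d1 := (hh_deriv p ω hω).ofReal_comp
    have d2 := (h1_deriv p ω hω).ofReal_comp
    have d3 := (hEd ω).mul ((d1.mul_const (-Complex.I / x)).add (d2.div_const ((x:ℂ)^2)))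
    refine d3.congr_deriv ?_
    change _ * (_ + _) + _ * (((h1 p ω : ℝ) : ℂ) * _ + _) = _
    field_simp
    linear_combination (-E ω * x * hh p ω * x) * Complex.I_sq
  have int1 : IntegrableOn (fun ω => (hh p ω : ℂ) * E ω) (Set.Ioi δ) :=
    (gg_int p hp x).mono_set (Set.Ioi_subset_Ioi hδ.le)
  have hrp : IntegrableOn (fun ω : ℝ => C / |x|^2 * ω ^ (q - 2)) (Set.Ioi δ) :=
    (integrableOn_Ioi_rpow_of_lt (by linarith) hδ).const_mul _
  have nb : ∀ ω ∈ Set.Ioi δ, ‖(h2 p ω : ℂ) / x^2 * E ω‖ ≤ C / |x|^2 * ω ^ (q - 2) := by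
    intro ω hω
    have hω : 0 < ω := hδ.trans hω
    rw [norm_mul, norm_e, mul_one, norm_div, norm_pow, Complex.norm_real, Complex.norm_real, Real.norm_eq_abs, Real.norm_eq_abs,
      div_mul_eq_mul_div]
    gcongr
    exact HC ω hω
  have nb' := (ae_restrict_iff' (μ := volume) (measurableSet_Ioi (a := δ))).2 (ae_of_all _ nb)
  have int2 : IntegrableOn (fun ω => (h2 p ω : ℂ) / x^2 * E ω) (Set.Ioi δ) := by
    refine Integrable.mono' hrp ?_ nb'
    refine Measurable.aestronglyMeasurable ?_
    unfold h2 h1 hh; fun_prop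
  have Gn : ∀ ω, 0 < ω → ‖G ω‖ ≤ hh p ω / |x| + |h1 p ω| / |x|^2 := by
    intro ω hω
    rw [hG]
    simp only
    rw [norm_mul, norm_e, one_mul]
    refine (norm_add_le _ _).trans (le_of_eq ?_)
    simp only [norm_mul, norm_div, norm_neg, Complex.norm_I, Complex.norm_real, norm_pow, Real.norm_eq_abs,
      abs_of_nonneg (hh_nonneg p hω)]
    ring
  have Gt : Tendsto G atTop (nhds 0) := by
    refine squeeze_zero_norm' (a := fun ω : ℝ => (A' / |x| + B / |x|^2) * ω ^ (-(1-q))) ?_ ?_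
    · filter_upwards [eventually_gt_atTop 0] with ω hω
      refine (Gn ω hω).trans ?_
      have e1 := HA' ω hω
      have e2 := HB ω hω
      rw [show -(1-q) = q - 1 by ring]
      calc _ ≤ (A' * ω ^ (q-1)) / |x| + (B * ω ^ (q-1)) / |x|^2 := by gcongr
        _ = _ := by ring
    · have := (tendsto_rpow_neg_atTop (y := 1 - q) (by linarith)).const_mul (A' / |x| + B / |x|^2)
      rwa [mul_zero] at this
  have ftc := integral_Ioi_of_hasDerivAt_of_tendsto' hGd (int1.add int2) Gt
  rw [integral_add int1 int2] at ftc
  have : (∫ ω in Set.Ioi δ, (hh p ω : ℂ) * E ω) = - G δ - ∫ ω in Set.Ioi δ, (h2 p ω : ℂ) / x^2 * E ω := by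
    linear_combination ftc
  rw [this]
  have i2 : ‖∫ ω in Set.Ioi δ, (h2 p ω : ℂ) / x^2 * E ω‖ ≤ C * δ ^ (q-1) / (1 - q) / |x|^2 := by
    refine (norm_integral_le_of_norm_le hrp nb').trans (le_of_eq ?_)
    rw [integral_const_mul, integral_Ioi_rpow_of_lt (by linarith) hδ]
    rw [show q - 2 + 1 = -(1 - q) by ring, show q - 1 = -(1 - q) by ring, neg_div_neg_eq]
    ring
  have e1 := HA δ hδ
  have e2 := HB δ hδ
  calc _ ≤ ‖G δ‖ + ‖∫ ω in Set.Ioi δ, (h2 p ω : ℂ) / x^2 * E ω‖ := by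
        refine (norm_sub_le _ _).trans ?_
        rw [norm_neg]
    _ ≤ (hh p δ / |x| + |h1 p δ| / |x|^2) + C * δ ^ (q-1) / (1 - q) / |x|^2 := add_le_add (Gn δ hδ) i2
    _ ≤ _ := by gcongr

lemma gg_decay (p : ℝ) (hp : 0 < p) : ∃ q : ℝ, 0 < q ∧ ∃ K : ℝ, 0 ≤ K ∧ ∀ x : ℝ, x ≠ 0 → ‖gg p x‖ ≤ K * |x| ^ (-(q+1)) := by
  set q := min p (1/2) with hq
  have hq0 : 0 < q := by rw [hq]; positivity
  have hq1 : q < 1 := (min_le_right _ _).trans_lt (by norm_num)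
  have hqp : q ≤ p := min_le_left _ _
  obtain ⟨A, hA, HA⟩ := hh_bd p q hqp
  have HA' := hh_bd p (q-1) (by linarith)
  obtain ⟨B, hB, HB⟩ := h1_bd p (q-1) (by linarith)
  obtain ⟨C, hC, HC⟩ := h2_bd p (q-2) (by linarith)
  have h1q : 0 < 1 - q := by linarith
  refine ⟨q, hq0, A + (A + B + C / (1-q)), by positivity, fun x hx => ?_⟩
  have hx0 : 0 < |x| := abs_pos.2 hx
  set δ := |x|⁻¹ with hδ
  have hδ0 : 0 < δ := by positivity
  have ht := tail p hp x hx δ hδ0 q hq0 hq1 A B C hA hB hC HA HA' HB HC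
  have hs : gg p x = (∫ ω in Set.Ioc 0 δ, (hh p ω : ℂ) * Complex.exp (Complex.I * x * ω)) +
      ∫ ω in Set.Ioi δ, (hh p ω : ℂ) * Complex.exp (Complex.I * x * ω) := by
    rw [gg, ← Set.Ioc_union_Ioi_eq_Ioi hδ0.le]
    exact setIntegral_union Set.Ioc_disjoint_Ioi_same measurableSet_Ioi
      ((gg_int p hp x).mono_set Set.Ioc_subset_Ioi_self) ((gg_int p hp x).mono_set (Set.Ioi_subset_Ioi hδ0.le))
  have hh1 : ‖∫ ω in Set.Ioc 0 δ, (hh p ω : ℂ) * Complex.exp (Complex.I * x * ω)‖ ≤ A * δ ^ q * δ := by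
    have := norm_setIntegral_le_of_norm_le_const (μ := volume) (s := Set.Ioc 0 δ) (C := A * δ ^ q)
      (f := fun ω : ℝ => (hh p ω : ℂ) * Complex.exp (Complex.I * x * ω)) (by simp) (fun ω hω => by
        rw [norm_mul, norm_e, mul_one, Complex.norm_real, Real.norm_of_nonneg (hh_nonneg _ hω.1)]
        refine (HA ω hω.1).trans ?_
        have := hω.1
        have := hω.2
        gcongr)
    simpa [hδ0.le] using this
  have e0 : δ ^ (q + 1) = |x| ^ (-(q+1)) := by
    rw [hδ, Real.inv_rpow hx0.le, Real.rpow_neg hx0.le]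
  have e1 : δ ^ q * δ = δ ^ (q+1) := by rw [Real.rpow_add_one hδ0.ne']
  have e2 : δ ^ (q-1) * δ ^ 2 = δ ^ (q+1) := by
    rw [← Real.rpow_natCast, ← Real.rpow_add hδ0]; congr 1; push_cast; ring
  have e3 : A * δ ^ q / |x| + B * δ ^ (q - 1) / |x|^2 + C * δ ^ (q-1) / (1 - q) / |x|^2 =
      (A + B + C / (1-q)) * δ ^ (q+1) := by
    have a1 : A * δ ^ q / |x| = A * (δ ^ q * δ) := by rw [hδ, div_eq_mul_inv]; ring
    have a2 : ∀ y : ℝ, y / |x|^2 = y * δ ^ 2 := fun y => by rw [hδ, div_eq_mul_inv, inv_pow]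
    rw [a1, a2, a2, e1, ← e2]; ring
  rw [e3] at ht
  rw [mul_assoc, e1] at hh1
  rw [hs, ← e0]
  refine (norm_add_le _ _).trans ?_
  linarith

lemma gg_integrable (p : ℝ) (hp : 0 < p) : Integrable (gg p) := by
  obtain ⟨q, hq, K, hK, H⟩ := gg_decay p hp
  have hm := (mm_pos p (by linarith)).le
  have h0 := (integrable_one_add_norm (E := ℝ) (μ := volume) (r := q + 1) (by simpa using hq)).const_mul ((K + mm p) * 2 ^ (q+1))
  refine Integrable.mono' h0 (gg_cont p hp).aestronglyMeasurable (ae_of_all _ fun x => ?_)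
  rw [mul_assoc, Real.norm_eq_abs]
  have e : (2:ℝ) ^ (q+1) * (1 + |x|) ^ (-(q+1)) = ((1 + |x|)/2) ^ (-(q+1)) := by
    rw [Real.div_rpow (by positivity) (by norm_num), Real.rpow_neg (x := 2) (by norm_num)]
    field_simp
  rw [e]
  rcases le_total |x| 1 with h | h
  · have : 1 ≤ ((1 + |x|)/2) ^ (-(q+1)) :=
      Real.one_le_rpow_of_pos_of_le_one_of_nonpos (by positivity) (by linarith) (by linarith)
    calc _ ≤ mm p := gg_le p x
      _ ≤ (K + mm p) * 1 := by linarith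
      _ ≤ _ := by gcongr
  · have hx0 : x ≠ 0 := by rintro rfl; simp at h; linarith
    have : |x| ^ (-(q+1)) ≤ ((1 + |x|)/2) ^ (-(q+1)) :=
      Real.rpow_le_rpow_of_nonpos (by positivity) (by linarith) (by linarith)
    calc _ ≤ K * |x| ^ (-(q+1)) := H x hx0
      _ ≤ (K + mm p) * ((1 + |x|)/2) ^ (-(q+1)) := by gcongr; linarith

noncomputable def AA (p ω : ℝ) : ℝ := hh p (max ω 0)

lemma AA_cont (p : ℝ) (hp : 0 < p) : Continuous (AA p) := by
  unfold AA hh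
  refine Continuous.mul ?_ (by fun_prop)
  exact (continuous_id.max continuous_const).rpow_const fun _ => Or.inr hp.le

lemma hh_zero (p : ℝ) (hp : 0 < p) : hh p 0 = 0 := by simp [hh, Real.zero_rpow hp.ne']

lemma AA_ind (p : ℝ) (hp : 0 < p) : AA p = (Set.Ioi (0:ℝ)).indicator (hh p) := by
  funext ω
  by_cases h : 0 < ω
  · rw [Set.indicator_of_mem (Set.mem_Ioi.2 h), AA, max_eq_left h.le]
  · rw [Set.indicator_of_notMem (by simpa using h), AA, max_eq_right (not_lt.1 h), hh_zero p hp]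

lemma AA_int (p : ℝ) (hp : 0 < p) : Integrable (AA p) := by
  rw [AA_ind p hp, integrable_indicator_iff measurableSet_Ioi]
  exact hh_int p (by linarith)

open FourierTransform in
lemma inv_AA (p : ℝ) (hp : 0 < p) :
    𝓕⁻ (fun ω : ℝ => (AA p ω : ℂ)) = fun ξ : ℝ => gg p (2 * π * ξ) := by
  funext ξ
  rw [Real.fourierInv_eq', gg, ← integral_indicator measurableSet_Ioi]
  congr 1
  funext ω
  rw [AA_ind p hp]
  by_cases h : ω ∈ Set.Ioi (0:ℝ)
  · rw [Set.indicator_of_mem h, Set.indicator_of_mem h, smul_eq_mul, mul_comm]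
    congr 2
    simp
    ring
  · rw [Set.indicator_of_notMem h, Set.indicator_of_notMem h]; simp

open FourierTransform in
lemma four_gg (p : ℝ) (hp : 0 < p) (ω : ℝ) :
    ∫ x : ℝ, gg p x * Complex.exp (-(Complex.I * ω * x)) = 2 * π * AA p ω := by
  have hc : Continuous (fun ω : ℝ => (AA p ω : ℂ)) := Complex.continuous_ofReal.comp (AA_cont p hp)
  have hi : Integrable (𝓕⁻ (fun ω : ℝ => (AA p ω : ℂ))) := by
    rw [inv_AA p hp]
    exact (gg_integrable p hp).comp_mul_left' (by positivity)
  have hf : Integrable (𝓕 (fun ω : ℝ => (AA p ω : ℂ))) := by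
    have := hi.comp_neg
    refine this.congr (ae_of_all _ fun x => ?_)
    simp only [Real.fourierInv_eq_fourier_neg, neg_neg]
  have key := congrFun (hc.fourier_fourierInv_eq (AA_int p hp).ofReal hf) ω
  rw [inv_AA p hp, Real.fourier_eq'] at key
  have h2 := Measure.integral_comp_mul_left (fun x : ℝ => gg p x * Complex.exp (-(Complex.I * ω * x))) (2 * π)
  have h3 : (∫ v : ℝ, Complex.exp (↑(-2 * π * inner ℝ v ω) * Complex.I) • gg p (2 * π * v)) =
     ∫ v : ℝ, gg p (2 * π * v) * Complex.exp (-(Complex.I * ω * ((2 * π * v : ℝ) : ℂ))) := by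
    congr 1; funext v
    rw [smul_eq_mul, mul_comm]
    congr 2
    simp
    ring
  rw [h3, h2, abs_of_pos (by positivity), Complex.real_smul] at key
  rw [← key]
  push_cast
  have : (π : ℂ) ≠ 0 := by exact_mod_cast Real.pi_ne_zero
  field_simp

lemma four_gg_neg (p : ℝ) (hp : 0 < p) (ω : ℝ) :
    ∫ x : ℝ, gg p (-x) * Complex.exp (-(Complex.I * ω * x)) = 2 * π * AA p (-ω) := by
  rw [← four_gg p hp (-ω), ← integral_neg_eq_self]
  congr 1; funext x; simp

lemma LamE_gg (p : ℝ) (hp : 0 < p) (x : ℝ) :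
    (LamE p x : ℂ) = ((1 / Real.sqrt (2 * Real.pi)) / mm p : ℝ) * ((gg p x + gg p (-x)) / 2) := by
  rw [LamE_eq p hp, gg, gg, ← integral_add (gg_int p hp x) (gg_int p hp (-x)), ← integral_div, Complex.ofReal_mul]
  congr 1
  rw [← integral_complex_ofReal]
  congr 1; funext ω
  push_cast
  rw [Complex.cos]
  ring_nf

lemma LamO_gg (p : ℝ) (hp : 0 < p) (x : ℝ) :
    (LamO p x : ℂ) = ((1 / Real.sqrt (2 * Real.pi)) / mm (p+1) : ℝ) * ((gg p x - gg p (-x)) * (-Complex.I / 2)) := by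
  rw [LamO_eq p hp, gg, gg, ← integral_sub (gg_int p hp x) (gg_int p hp (-x)), ← integral_mul_const, Complex.ofReal_mul]
  congr 1
  rw [← integral_complex_ofReal]
  congr 1; funext ω
  push_cast
  rw [Complex.sin]
  ring_nf

lemma norm_e' (ω x : ℝ) : ‖Complex.exp (-(Complex.I * ω * x))‖ = 1 := by
  have := norm_e (-ω) x
  rwa [show Complex.I * ((-ω : ℝ) : ℂ) * x = -(Complex.I * ω * x) by push_cast; ring] at this

lemma int_e (k : ℝ → ℂ) (hk : Integrable k) (ω : ℝ) :
    Integrable (fun x : ℝ => k x * Complex.exp (-(Complex.I * ω * x))) := by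
  refine hk.mul_bdd (c := 1) (Measurable.aestronglyMeasurable (by fun_prop)) (ae_of_all _ fun x => ?_)
  rw [norm_e']

lemma LamE_int (p : ℝ) (hp : 0 < p) : Integrable (fun x => (LamE p x : ℂ)) := by
  simp only [LamE_gg p hp]
  exact (((gg_integrable p hp).add (gg_integrable p hp).comp_neg).div_const 2).const_mul _

lemma LamO_int (p : ℝ) (hp : 0 < p) : Integrable (fun x => (LamO p x : ℂ)) := by
  simp only [LamO_gg p hp]
  exact (((gg_integrable p hp).sub (gg_integrable p hp).comp_neg).mul_const _).const_mul _

lemma AA_add (p : ℝ) (hp : 0 < p) (ω : ℝ) :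
    AA p ω + AA p (-ω) = |ω| ^ p * Real.exp (-ω ^ 2 / 2) := by
  have e : ∀ y : ℝ, -(1/2) * y ^ 2 = - y ^ 2 / 2 := fun y => by ring
  have z : (0:ℝ) ^ p = 0 := Real.zero_rpow hp.ne'
  rcases le_total 0 ω with h | h
  · simp only [AA, max_eq_left h, max_eq_right (neg_nonpos.2 h), hh, e, abs_of_nonneg h, z]; simp
  · simp only [AA, max_eq_right h, max_eq_left (neg_nonneg.2 h), hh, e, abs_of_nonpos h, z]; simp

lemma AA_sub (p : ℝ) (hp : 0 < p) (ω : ℝ) :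
    AA p ω - AA p (-ω) = Real.sign ω * |ω| ^ p * Real.exp (-ω ^ 2 / 2) := by
  have e : ∀ y : ℝ, -(1/2) * y ^ 2 = - y ^ 2 / 2 := fun y => by ring
  have z : (0:ℝ) ^ p = 0 := Real.zero_rpow hp.ne'
  rcases lt_trichotomy 0 ω with h | h | h
  · simp only [AA, max_eq_left h.le, max_eq_right (neg_nonpos.2 h.le), hh, e, abs_of_nonneg h.le, z, Real.sign_of_pos h]; simp
  · subst h; simp
  · simp only [AA, max_eq_right h.le, max_eq_left (neg_nonneg.2 h.le), hh, e, abs_of_nonpos h.le, z, Real.sign_of_neg h]; simp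

lemma LamE_four (p : ℝ) (hp : 0 < p) (ω : ℝ) :
    ∫ x : ℝ, (LamE p x : ℂ) * Complex.exp (-(Complex.I * ω * x)) =
      (((1 / Real.sqrt (2 * Real.pi)) / mm p * π : ℝ) : ℂ) * ((|ω| ^ p : ℝ) : ℂ) * ((Real.exp (-ω ^ 2 / 2) : ℝ) : ℂ) := by
  have i1 := int_e _ (gg_integrable p hp) ω
  have i2 := int_e _ (gg_integrable p hp).comp_neg ω
  have h := AA_add p hp ω
  have h' : (AA p ω : ℂ) + AA p (-ω) = ((|ω| ^ p : ℝ) : ℂ) * ((Real.exp (-ω ^ 2 / 2) : ℝ) : ℂ) := by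
    exact_mod_cast h
  set K := (1 / Real.sqrt (2 * Real.pi)) / mm p with hK
  calc _ = ∫ x : ℝ, ((K : ℂ) / 2) * (gg p x * Complex.exp (-(Complex.I * ω * x)) + gg p (-x) * Complex.exp (-(Complex.I * ω * x))) := by
        congr 1; funext x; rw [LamE_gg p hp]; ring
    _ = _ := by
        rw [integral_const_mul, integral_add i1 i2, four_gg p hp, four_gg_neg p hp, Complex.ofReal_mul]
        linear_combination (K * π : ℂ) * h'

lemma LamO_four (p : ℝ) (hp : 0 < p) (ω : ℝ) :
    ∫ x : ℝ, (LamO p x : ℂ) * Complex.exp (-(Complex.I * ω * x)) =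
      Complex.I * ((-((1 / Real.sqrt (2 * Real.pi)) / mm (p+1) * π) : ℝ) : ℂ) * ((Real.sign ω : ℝ) : ℂ) * ((|ω| ^ p : ℝ) : ℂ) * ((Real.exp (-ω ^ 2 / 2) : ℝ) : ℂ) := by
  have i1 := int_e _ (gg_integrable p hp) ω
  have i2 := int_e _ (gg_integrable p hp).comp_neg ω
  have h := AA_sub p hp ω
  have h' : (AA p ω : ℂ) - AA p (-ω) = ((Real.sign ω : ℝ) : ℂ) * ((|ω| ^ p : ℝ) : ℂ) * ((Real.exp (-ω ^ 2 / 2) : ℝ) : ℂ) := by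
    exact_mod_cast h
  set K := (1 / Real.sqrt (2 * Real.pi)) / mm (p+1) with hK
  calc _ = ∫ x : ℝ, ((K : ℂ) * (-Complex.I/ 2)) * (gg p x * Complex.exp (-(Complex.I * ω * x)) - gg p (-x) * Complex.exp (-(Complex.I * ω * x))) := by
        congr 1; funext x; rw [LamO_gg p hp]; ring
    _ = _ := by
        rw [integral_const_mul, integral_sub i1 i2, four_gg p hp, four_gg_neg p hp, Complex.ofReal_neg, Complex.ofReal_mul]
        linear_combination (-Complex.I * K * π : ℂ) * h'

lemma scale (p ρ ω : ℝ) (hρ : 0 < ρ) (L : ℝ → ℝ) :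
    (∫ x : ℝ, ((ρ ^ (p + 1) * L (x * ρ) : ℝ) : ℂ) * Complex.exp (-(Complex.I * ω * x))) =
      ((ρ ^ p : ℝ) : ℂ) * ∫ x : ℝ, (L x : ℂ) * Complex.exp (-(Complex.I * ((ω / ρ : ℝ) : ℂ) * x)) := by
  have h := Measure.integral_comp_mul_right (fun x : ℝ => (L x : ℂ) * Complex.exp (-(Complex.I * ((ω / ρ : ℝ) : ℂ) * x))) ρ
  have hc : (ρ : ℂ) ≠ 0 := by exact_mod_cast hρ.ne'
  rw [abs_of_pos (by positivity), Complex.real_smul] at h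
  have h2 : (∫ x : ℝ, (L x : ℂ) * Complex.exp (-(Complex.I * ((ω / ρ : ℝ) : ℂ) * x))) = (ρ : ℂ) *
     ∫ x : ℝ, (L (x * ρ) : ℂ) * Complex.exp (-(Complex.I * ((ω / ρ : ℝ) : ℂ) * ((x * ρ : ℝ) : ℂ))) := by
    rw [h]; push_cast; field_simp
  rw [h2, ← mul_assoc, ← integral_const_mul]
  congr 1; funext x
  have e : Complex.I * ((ω / ρ : ℝ) : ℂ) * ((x * ρ : ℝ) : ℂ) = Complex.I * ω * x := by
    push_cast; field_simp
  rw [e, Real.rpow_add_one hρ.ne']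
  push_cast; ring

lemma scale_val (p ρ ω : ℝ) (hρ : 0 < ρ) : ρ ^ p * (|ω / ρ| ^ p * Real.exp (-(ω / ρ) ^ 2 / 2)) =
    |ω| ^ p * Real.exp (-ω ^ 2 / (2 * ρ ^ 2)) := by
  rw [abs_div, abs_of_pos hρ, Real.div_rpow (abs_nonneg _) hρ.le]
  have : -(ω / ρ) ^ 2 / 2 = -ω ^ 2 / (2 * ρ ^ 2) := by field_simp
  rw [this]
  have := Real.rpow_pos_of_pos hρ p
  field_simp

lemma sign_div (ω ρ : ℝ) (hρ : 0 < ρ) : Real.sign (ω / ρ) = Real.sign ω := by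
  rcases lt_trichotomy 0 ω with h | h | h
  · rw [Real.sign_of_pos h, Real.sign_of_pos (by positivity)]
  · subst h; simp
  · rw [Real.sign_of_neg h, Real.sign_of_neg (div_neg_of_neg_of_pos h hρ)]

lemma conv_four (f k : ℝ → ℂ) (hf : Integrable f) (hk : Integrable k) (ω : ℝ) :
    (∫ x : ℝ, (∫ v : ℝ, f v * k (x - v)) * Complex.exp (-(Complex.I * ω * x))) =
      (∫ x : ℝ, k x * Complex.exp (-(Complex.I * ω * x))) *
      (∫ x : ℝ, f x * Complex.exp (-(Complex.I * ω * x))) := by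
  have h := integral_convolution (ContinuousLinearMap.mul ℝ ℂ) (μ := volume) (ν := volume) (int_e f hf ω) (int_e k hk ω)
  rw [ContinuousLinearMap.mul_apply'] at h
  rw [mul_comm (∫ x : ℝ, k x * _), ← h]
  congr 1; funext x
  rw [convolution_def, ← integral_mul_const]
  congr 1; funext v
  rw [ContinuousLinearMap.mul_apply']
  have : Complex.exp (-(Complex.I * ω * x)) = Complex.exp (-(Complex.I * ω * v)) * Complex.exp (-(Complex.I * ω * ((x - v : ℝ) : ℂ))) := by
    rw [← Complex.exp_add]; congr 1; push_cast; ring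
  rw [this]; ring

lemma scale_int (c ρ : ℝ) (hρ : 0 < ρ) (L : ℝ → ℝ) (hL : Integrable (fun x => (L x : ℂ))) :
    Integrable (fun x => ((c * L (x * ρ) : ℝ) : ℂ)) := by
  simp only [Complex.ofReal_mul]
  exact (hL.comp_mul_right' hρ.ne').const_mul _

/-- Fourier transforms of the scaled kernels `g^e_p(x,ρ) = ρ^{p+1}Λ^e_p(xρ)` and
`g^o_p(x,ρ) = ρ^{p+1}Λ^o_p(xρ)`: there are nonzero constants `c, d` (independent of `ρ` and `ω`)
with `𝓕(g^e_p(·,ρ))(ω) = c|ω|^p e^{-ω²/(2ρ²)}`, `𝓕(g^o_p(·,ρ))(ω) = i d sign(ω)|ω|^p e^{-ω²/(2ρ²)}`,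
and the corresponding convolution identities `𝓕(f * g^θ_p(·,ρ)) = 𝓕(g^θ_p(·,ρ)) · 𝓕f`. -/
theorem stmt_15 (p : ℝ) (hp : 0 < p) :
    ∃ c : ℝ, c ≠ 0 ∧ ∃ d : ℝ, d ≠ 0 ∧
      ∀ ρ : ℝ, 0 < ρ →
        (∀ ω : ℝ,
          (∫ x : ℝ, ((ρ ^ (p + 1) * LamE p (x * ρ) : ℝ) : ℂ) *
              Complex.exp (-(Complex.I * ω * x))) =
            (c : ℂ) * ((|ω| ^ p : ℝ) : ℂ) * ((Real.exp (-ω ^ 2 / (2 * ρ ^ 2)) : ℝ) : ℂ) ∧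
          (∫ x : ℝ, ((ρ ^ (p + 1) * LamO p (x * ρ) : ℝ) : ℂ) *
              Complex.exp (-(Complex.I * ω * x))) =
            Complex.I * (d : ℂ) * ((Real.sign ω : ℝ) : ℂ) * ((|ω| ^ p : ℝ) : ℂ) *
              ((Real.exp (-ω ^ 2 / (2 * ρ ^ 2)) : ℝ) : ℂ)) ∧
        ∀ f : ℝ → ℂ, Integrable f → ∀ ω : ℝ,
          (∫ x : ℝ, (∫ v : ℝ, f v * ((ρ ^ (p + 1) * LamE p ((x - v) * ρ) : ℝ) : ℂ)) *
              Complex.exp (-(Complex.I * ω * x))) =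
            (c : ℂ) * ((|ω| ^ p : ℝ) : ℂ) * ((Real.exp (-ω ^ 2 / (2 * ρ ^ 2)) : ℝ) : ℂ) *
              (∫ x : ℝ, f x * Complex.exp (-(Complex.I * ω * x))) ∧
          (∫ x : ℝ, (∫ v : ℝ, f v * ((ρ ^ (p + 1) * LamO p ((x - v) * ρ) : ℝ) : ℂ)) *
              Complex.exp (-(Complex.I * ω * x))) =
            Complex.I * (d : ℂ) * ((Real.sign ω : ℝ) : ℂ) * ((|ω| ^ p : ℝ) : ℂ) *
              ((Real.exp (-ω ^ 2 / (2 * ρ ^ 2)) : ℝ) : ℂ) *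
              (∫ x : ℝ, f x * Complex.exp (-(Complex.I * ω * x))) := by
  have m1 := mm_pos p (by linarith)
  have m2 := mm_pos (p+1) (by linarith)
  refine ⟨(1 / Real.sqrt (2 * Real.pi)) / mm p * π, by positivity,
    -((1 / Real.sqrt (2 * Real.pi)) / mm (p+1) * π), neg_ne_zero.2 (by positivity), fun ρ hρ => ?_⟩
  have sv : ∀ ω : ℝ, ((ρ ^ p : ℝ) : ℂ) * (((|ω / ρ| ^ p : ℝ) : ℂ) * ((Real.exp (-(ω / ρ) ^ 2 / 2) : ℝ) : ℂ)) =
      ((|ω| ^ p : ℝ) : ℂ) * ((Real.exp (-ω ^ 2 / (2 * ρ ^ 2)) : ℝ) : ℂ) := fun ω => by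
    exact_mod_cast scale_val p ρ ω hρ
  refine (and_iff_left_of_imp fun H f hf ω => ?_).2 fun ω => ⟨?_, ?_⟩
  · obtain ⟨h1, h2⟩ := H ω
    rw [← h1, ← h2]
    exact ⟨conv_four f _ hf (scale_int (ρ ^ (p+1)) ρ hρ (LamE p) (LamE_int p hp)) ω,
      conv_four f _ hf (scale_int (ρ ^ (p+1)) ρ hρ (LamO p) (LamO_int p hp)) ω⟩
  · rw [scale p ρ ω hρ (LamE p), LamE_four p hp]
    rw [mul_assoc _ ((|ω| ^ p : ℝ) : ℂ), ← sv ω]; ring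
  · rw [scale p ρ ω hρ (LamO p), LamO_four p hp, sign_div ω ρ hρ]
    rw [mul_assoc _ ((|ω| ^ p : ℝ) : ℂ), ← sv ω]; ring
end

section
/- Let p > 0 and let m be an integer with m > p + 3. Let f : ℝ → ℂ be m times continuously differentiable with f^{(n)} ∈ L¹(ℝ) for every 0 ≤ n ≤ m. Then for θ ∈ {e,o}, the function Ψ^θ_p(x,σ) is twice continuously differentiable in x and continuously differentiable in σ on ℝ × (0,∞), and it satisfies the scale-space evolution equation σ · ∂²Ψ^θ_p/∂x²(x,σ) = ∂Ψ^θ_p/∂σ(x,σ) for every real x and every σ > 0. -/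
open MeasureTheory Real

/-- The even frequency-domain multiplier `(iω)^p + (-iω)^p` (principal branch;
`0^p = 0` for `p > 0`). -/
noncomputable def kerE (p ω : ℝ) : ℂ :=
  (Complex.I * ω) ^ (p : ℂ) + (-(Complex.I * ω)) ^ (p : ℂ)

/-- The odd frequency-domain multiplier `(iω)^p - (-iω)^p`. -/
noncomputable def kerO (p ω : ℝ) : ℂ :=
  (Complex.I * ω) ^ (p : ℂ) - (-(Complex.I * ω)) ^ (p : ℂ)

/-- `Ψ^e_p(x,σ) = (1/2π) ∫ F(ω)((iω)^p + (-iω)^p) e^{-ω²σ²/2} e^{iωx} dω`. -/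
noncomputable def PsiE (F : ℝ → ℂ) (p x σ : ℝ) : ℂ :=
  (1 / (2 * (Real.pi : ℂ))) *
    ∫ ω : ℝ, F ω * kerE p ω * ((Real.exp (-(ω ^ 2 * σ ^ 2) / 2) : ℝ) : ℂ) *
      Complex.exp (Complex.I * ω * x)

/-- `Ψ^o_p(x,σ) = (1/2π) ∫ F(ω)((iω)^p - (-iω)^p) e^{-ω²σ²/2} e^{iωx} dω`. -/
noncomputable def PsiO (F : ℝ → ℂ) (p x σ : ℝ) : ℂ :=
  (1 / (2 * (Real.pi : ℂ))) *
    ∫ ω : ℝ, F ω * kerO p ω * ((Real.exp (-(ω ^ 2 * σ ^ 2) / 2) : ℝ) : ℂ) *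
      Complex.exp (Complex.I * ω * x)

lemma aux_int (q : ℝ) (hq : 0 ≤ q) (b : ℝ) (hb : 0 < b) :
    Integrable (fun x : ℝ => |x| ^ q * Real.exp (-b * x ^ 2)) := by
  obtain ⟨n, hn⟩ := exists_nat_ge q
  have h0 : Integrable (fun x : ℝ => Real.exp (-b * x ^ 2)) := integrable_exp_neg_mul_sq hb
  have h1 := (integrable_rpow_mul_exp_neg_mul_sq hb (s := (n : ℝ))
    (by have : (0 : ℝ) ≤ n := Nat.cast_nonneg n
        linarith)).norm
  refine (h0.add h1).mono' ?_ ?_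
  · apply Measurable.aestronglyMeasurable
    fun_prop
  · refine Filter.Eventually.of_forall fun x => ?_
    have hE := Real.exp_pos (-b * x ^ 2)
    have hx := abs_nonneg x
    simp only [Pi.add_apply, norm_mul, Real.norm_eq_abs, Real.rpow_natCast, abs_pow,
      abs_of_pos hE, abs_of_nonneg (Real.rpow_nonneg hx q)]
    have : |x| ^ q ≤ 1 + |x| ^ n := by
      rcases le_total |x| 1 with h | h
      · have := Real.rpow_le_one hx h hq
        have := pow_nonneg hx n
        linarith
      · have := Real.rpow_le_rpow_of_exponent_le h hn
        rw [Real.rpow_natCast] at this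
        linarith
    nlinarith

noncomputable def JJ (G : ℝ → ℂ) (x σ : ℝ) : ℂ :=
  ∫ ω : ℝ, G ω * ((Real.exp (-(ω ^ 2 * σ ^ 2) / 2) : ℝ) : ℂ) * Complex.exp (Complex.I * ω * x)

def Good (G : ℝ → ℂ) (q : ℝ) : Prop :=
  Measurable G ∧ ∃ C : ℝ, ∀ ω, ‖G ω‖ ≤ C * |ω| ^ q

lemma norm_cexp_I (ω x : ℝ) : ‖Complex.exp (Complex.I * ω * x)‖ = 1 := by
  rw [show Complex.I * (ω : ℂ) * x = ((ω * x : ℝ) : ℂ) * Complex.I by push_cast; ring]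
  exact Complex.norm_exp_ofReal_mul_I _

lemma norm_integrand (g : ℂ) (ω x σ : ℝ) :
    ‖g * ((Real.exp (-(ω ^ 2 * σ ^ 2) / 2) : ℝ) : ℂ) * Complex.exp (Complex.I * ω * x)‖
      = ‖g‖ * Real.exp (-(ω ^ 2 * σ ^ 2) / 2) := by
  rw [norm_mul, norm_mul, norm_cexp_I, Complex.norm_real, Real.norm_eq_abs, abs_of_pos (Real.exp_pos _), mul_one]

lemma Good.mul {G : ℝ → ℂ} {q : ℝ} (hG : Good G q) (hq : 0 ≤ q) (c : ℂ) :
    Good (fun ω => (c * ω) * G ω) (q + 1) := by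
  obtain ⟨hm, C, hC⟩ := hG
  refine ⟨by fun_prop, ‖c‖ * C, fun ω => ?_⟩
  rw [Real.rpow_add_one' (abs_nonneg _) (by positivity), norm_mul, norm_mul, Complex.norm_real,
    Real.norm_eq_abs]
  have := mul_le_mul_of_nonneg_left (hC ω) (by positivity : 0 ≤ ‖c‖ * |ω|)
  linarith

lemma Good.meas {G : ℝ → ℂ} {q : ℝ} (hG : Good G q) (x σ : ℝ) :
    AEStronglyMeasurable (fun ω : ℝ => G ω * ((Real.exp (-(ω ^ 2 * σ ^ 2) / 2) : ℝ) : ℂ) *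
      Complex.exp (Complex.I * ω * x)) volume := by
  have := hG.1
  apply Measurable.aestronglyMeasurable
  fun_prop

lemma exp_form (σ ω : ℝ) : Real.exp (-(ω ^ 2 * σ ^ 2) / 2) = Real.exp (-(σ ^ 2 / 2) * ω ^ 2) := by
  congr 1
  ring

lemma Good.intNorm {G : ℝ → ℂ} {q : ℝ} (hG : Good G q) (hq : 0 ≤ q) (σ : ℝ) (hσ : 0 < σ) :
    Integrable (fun ω : ℝ => ‖G ω‖ * Real.exp (-(ω ^ 2 * σ ^ 2) / 2)) := by
  obtain ⟨hm, C, hC⟩ := hG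
  refine ((aux_int q hq (σ ^ 2 / 2) (by positivity)).const_mul C).mono' ?_ ?_
  · apply Measurable.aestronglyMeasurable
    fun_prop
  · refine Filter.Eventually.of_forall fun ω => ?_
    rw [Real.norm_eq_abs, abs_of_nonneg (by positivity), exp_form, ← mul_assoc]
    exact mul_le_mul_of_nonneg_right (hC ω) (Real.exp_pos _).le

lemma Good.int {G : ℝ → ℂ} {q : ℝ} (hG : Good G q) (hq : 0 ≤ q) (x σ : ℝ) (hσ : 0 < σ) :
    Integrable (fun ω : ℝ => G ω * ((Real.exp (-(ω ^ 2 * σ ^ 2) / 2) : ℝ) : ℂ) *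
      Complex.exp (Complex.I * ω * x)) :=
  (hG.intNorm hq σ hσ).mono' (hG.meas x σ)
    (Filter.Eventually.of_forall fun ω => (norm_integrand _ _ _ _).le)

lemma JJ_x {G : ℝ → ℂ} {q : ℝ} (hG : Good G q) (hq : 0 ≤ q) (x σ : ℝ) (hσ : 0 < σ) :
    HasDerivAt (fun y => JJ G y σ) (JJ (fun ω => (Complex.I * ω) * G ω) x σ) x := by
  have hG' := hG.mul hq Complex.I
  refine (hasDerivAt_integral_of_dominated_loc_of_deriv_le (s := Set.univ) Filter.univ_mem
    (Filter.Eventually.of_forall fun y => hG.meas y σ) (hG.int hq x σ hσ)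
    (F' := fun y ω => ((Complex.I * ω) * G ω) * ((Real.exp (-(ω ^ 2 * σ ^ 2) / 2) : ℝ) : ℂ) *
      Complex.exp (Complex.I * ω * y)) (hG'.meas x σ)
    (Filter.Eventually.of_forall fun ω y _ => (norm_integrand _ _ _ _).le)
    (hG'.intNorm (by positivity) σ hσ)
    (Filter.Eventually.of_forall fun ω y _ => ?_)).2
  have h1 : HasDerivAt (fun y : ℝ => Complex.I * ω * (y : ℂ)) (Complex.I * ω) y := by
    simpa using (Complex.ofRealCLM.hasDerivAt (x := y)).const_mul (Complex.I * ω)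
  have h2 := (h1.cexp).const_mul (G ω * ((Real.exp (-(ω ^ 2 * σ ^ 2) / 2) : ℝ) : ℂ))
  refine h2.congr_deriv ?_
  ring

lemma JJ_s {G : ℝ → ℂ} {q : ℝ} (hG : Good G q) (hq : 0 ≤ q) (x σ : ℝ) (hσ : 0 < σ) :
    HasDerivAt (fun s => JJ G x s)
      (σ * JJ (fun ω => (Complex.I * ω) * ((Complex.I * ω) * G ω)) x σ) σ := by
  have hG' := (hG.mul hq Complex.I).mul (by positivity) Complex.I
  have key := (hasDerivAt_integral_of_dominated_loc_of_deriv_le (s := Set.Ioo (σ / 2) (2 * σ))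
    (Ioo_mem_nhds (by linarith) (by linarith))
    (Filter.Eventually.of_forall fun s => hG.meas x s) (hG.int hq x σ hσ)
    (F' := fun s ω => (s : ℂ) * (((Complex.I * ω) * ((Complex.I * ω) * G ω)) *
      ((Real.exp (-(ω ^ 2 * s ^ 2) / 2) : ℝ) : ℂ) *
      Complex.exp (Complex.I * ω * x))) ((hG'.meas x σ).const_mul _)
    (Filter.Eventually.of_forall fun ω s hs => ?_)
    ((hG'.intNorm (by positivity) (σ / 2) (by positivity)).const_mul (2 * σ))
    (Filter.Eventually.of_forall fun ω s hs => ?_)).2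
  · rw [integral_const_mul] at key
    exact key
  · have hs0 : 0 < s := by linarith [hs.1]
    rw [norm_mul, norm_integrand, Complex.norm_real, Real.norm_eq_abs, abs_of_pos hs0]
    have h1 : Real.exp (-(ω ^ 2 * s ^ 2) / 2) ≤ Real.exp (-(ω ^ 2 * (σ / 2) ^ 2) / 2) := by
      apply Real.exp_le_exp.2
      have : (σ / 2) ^ 2 ≤ s ^ 2 := by
        apply pow_le_pow_left₀ (by positivity) hs.1.le
      have := mul_le_mul_of_nonneg_left this (sq_nonneg ω)
      linarith
    have h2 := hs.2.le
    gcongr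
  · have h0 : HasDerivAt (fun s : ℝ => -(ω ^ 2 * s ^ 2) / 2) (-(ω ^ 2 * s)) s := by
      have := (((hasDerivAt_pow 2 s).const_mul (ω ^ 2)).neg).div_const 2
      refine this.congr_deriv ?_
      norm_num
      ring
    have h2 := ((h0.exp.ofReal_comp).const_mul (G ω)).mul_const (Complex.exp (Complex.I * ω * x))
    refine h2.congr_deriv ?_
    rw [Complex.ofReal_mul]
    generalize ((Real.exp (-(ω ^ 2 * s ^ 2) / 2) : ℝ) : ℂ) = A
    generalize Complex.exp (Complex.I * ω * x) = B
    push_cast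
    linear_combination (-(s : ℂ) * (ω : ℂ) ^ 2 * G ω * A * B) * Complex.I_sq

lemma main_aux {G : ℝ → ℂ} {q : ℝ} (hG : Good G q) (hq : 0 ≤ q) (c : ℂ) :
    (∀ σ : ℝ, 0 < σ → ContDiff ℝ 2 (fun x => c * JJ G x σ)) ∧
    (∀ x : ℝ, ContDiffOn ℝ 1 (fun σ => c * JJ G x σ) (Set.Ioi 0)) ∧
    (∀ x : ℝ, ∀ σ : ℝ, 0 < σ →
      (σ : ℂ) * deriv (deriv fun y => c * JJ G y σ) x = deriv (fun s => c * JJ G x s) σ) := by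
  have hG1 := hG.mul hq Complex.I
  have hG2 := hG1.mul (by positivity) Complex.I
  have d1 : ∀ σ : ℝ, 0 < σ → ∀ x, HasDerivAt (fun y => c * JJ G y σ) _ x :=
    fun σ hσ x => (JJ_x hG hq x σ hσ).const_mul c
  have d2 : ∀ σ : ℝ, 0 < σ → ∀ x, HasDerivAt
      (fun y => c * JJ (fun ω => (Complex.I * ω) * G ω) y σ) _ x :=
    fun σ hσ x => (JJ_x hG1 (by positivity) x σ hσ).const_mul c
  have d3 : ∀ σ : ℝ, 0 < σ → ∀ x, HasDerivAt
      (fun y => c * JJ (fun ω => (Complex.I * ω) * ((Complex.I * ω) * G ω)) y σ) _ x :=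
    fun σ hσ x => (JJ_x hG2 (by positivity) x σ hσ).const_mul c
  have e1 : ∀ σ : ℝ, 0 < σ → deriv (fun y => c * JJ G y σ) = _ :=
    fun σ hσ => funext fun x => (d1 σ hσ x).deriv
  have e2 : ∀ σ : ℝ, 0 < σ → deriv (fun y => c * JJ (fun ω => (Complex.I * ω) * G ω) y σ) = _ :=
    fun σ hσ => funext fun x => (d2 σ hσ x).deriv
  have s1 : ∀ x σ : ℝ, 0 < σ → HasDerivAt (fun s => c * JJ G x s) _ σ :=
    fun x σ hσ => (JJ_s hG hq x σ hσ).const_mul c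
  refine ⟨fun σ hσ => ?_, fun x => ?_, fun x σ hσ => ?_⟩
  · rw [show (2 : WithTop ℕ∞) = 1 + 1 by norm_num, contDiff_succ_iff_deriv]
    refine ⟨fun x => (d1 σ hσ x).differentiableAt, by simp, ?_⟩
    rw [e1 σ hσ, contDiff_one_iff_deriv]
    refine ⟨fun x => (d2 σ hσ x).differentiableAt, ?_⟩
    rw [e2 σ hσ]
    exact continuous_iff_continuousAt.2 fun x => (d3 σ hσ x).continuousAt
  · rw [show (1 : WithTop ℕ∞) = 0 + 1 by norm_num, contDiffOn_succ_iff_deriv_of_isOpen isOpen_Ioi]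
    refine ⟨fun σ hσ => (s1 x σ hσ).differentiableAt.differentiableWithinAt, by simp, ?_⟩
    rw [contDiffOn_zero]
    have : ContinuousOn (fun σ : ℝ => c * ((σ : ℂ) *
        JJ (fun ω => (Complex.I * ω) * ((Complex.I * ω) * G ω)) x σ)) (Set.Ioi 0) := by
      refine continuousOn_const.mul (Complex.continuous_ofReal.continuousOn.mul fun σ hσ => ?_)
      exact (JJ_s hG2 (by positivity) x σ hσ).continuousAt.continuousWithinAt
    exact this.congr fun σ hσ => (s1 x σ hσ).deriv
  · rw [e1 σ hσ, e2 σ hσ, (s1 x σ hσ).deriv]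
    ring

lemma good_mul {F K : ℝ → ℂ} {q A B : ℝ} (hFm : Measurable F) (hA : ∀ ω, ‖F ω‖ ≤ A)
    (hK : Measurable K) (hB : ∀ ω, ‖K ω‖ ≤ B * |ω| ^ q) : Good (fun ω => F ω * K ω) q := by
  refine ⟨hFm.mul hK, A * B, fun ω => ?_⟩
  rw [norm_mul, mul_assoc]
  exact mul_le_mul (hA ω) (hB ω) (norm_nonneg _) ((norm_nonneg _).trans (hA ω))

lemma norm_a (p ω : ℝ) : ‖(Complex.I * ω) ^ (p : ℂ)‖ = |ω| ^ p := by
  rw [Complex.norm_cpow_real]; simp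

lemma norm_b (p ω : ℝ) : ‖(-(Complex.I * ω)) ^ (p : ℂ)‖ = |ω| ^ p := by
  rw [Complex.norm_cpow_real]; simp

/-- For `p > 0` and `m > p + 3`, the scale-space functions `Ψ^θ_p` (θ = e, o) are twice
continuously differentiable in `x`, continuously differentiable in `σ` on `(0,∞)`, and satisfy
the evolution equation `σ Ψ^θ_{xx} = Ψ^θ_σ` for every `x` and `σ > 0`. -/
theorem stmt_19 (p : ℝ) (hp : 0 < p) (m : ℕ) (hm : (m : ℝ) > p + 3)
    (f : ℝ → ℂ) (hf : ContDiff ℝ m f)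
    (hint : ∀ n ≤ m, Integrable (iteratedDeriv n f))
    (F : ℝ → ℂ) (hF : ∀ ω : ℝ, F ω = ∫ x : ℝ, f x * Complex.exp (-(Complex.I * ω * x))) :
    (∀ σ : ℝ, 0 < σ →
      ContDiff ℝ 2 (fun x => PsiE F p x σ) ∧ ContDiff ℝ 2 (fun x => PsiO F p x σ)) ∧
    (∀ x : ℝ,
      ContDiffOn ℝ 1 (fun σ => PsiE F p x σ) (Set.Ioi 0) ∧
      ContDiffOn ℝ 1 (fun σ => PsiO F p x σ) (Set.Ioi 0)) ∧
    (∀ x : ℝ, ∀ σ : ℝ, 0 < σ →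
      (σ : ℂ) * deriv (deriv fun y => PsiE F p y σ) x = deriv (fun s => PsiE F p x s) σ ∧
      (σ : ℂ) * deriv (deriv fun y => PsiO F p y σ) x = deriv (fun s => PsiO F p x s) σ) := by
  have hFm : Measurable F := by
    have hc := hf.continuous
    have : StronglyMeasurable (fun z : ℝ × ℝ =>
        f z.2 * Complex.exp (-(Complex.I * z.1 * z.2))) := by
      apply Continuous.stronglyMeasurable
      fun_prop
    have h2 := this.integral_prod_right' (ν := (volume : Measure ℝ))
    rw [show F = _ from funext hF]
    exact h2.measurable
  have hA : ∀ ω, ‖F ω‖ ≤ ∫ x, ‖f x‖ := by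
    intro ω
    rw [hF]
    refine (norm_integral_le_integral_norm _).trans (le_of_eq ?_)
    congr 1
    ext x
    have := norm_cexp_I (-ω) x
    rw [norm_mul, show -(Complex.I * (ω : ℂ) * x) = Complex.I * ((-ω : ℝ) : ℂ) * x by
      push_cast; ring, this, mul_one]
  have hE : Good (fun ω => F ω * kerE p ω) p := by
    refine good_mul (B := 2) hFm hA (by unfold kerE; fun_prop) fun ω => ?_
    refine (norm_add_le _ _).trans ?_
    rw [norm_a, norm_b]; linarith
  have hO : Good (fun ω => F ω * kerO p ω) p := by
    refine good_mul (B := 2) hFm hA (by unfold kerO; fun_prop) fun ω => ?_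
    refine (norm_sub_le _ _).trans ?_
    rw [norm_a, norm_b]; linarith
  obtain ⟨a1, a2, a3⟩ := main_aux hE hp.le (1 / (2 * (Real.pi : ℂ)))
  obtain ⟨b1, b2, b3⟩ := main_aux hO hp.le (1 / (2 * (Real.pi : ℂ)))
  exact ⟨fun σ hσ => ⟨a1 σ hσ, b1 σ hσ⟩, fun x => ⟨a2 x, b2 x⟩,
    fun x σ hσ => ⟨a3 x σ hσ, b3 x σ hσ⟩⟩
end
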